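/- arXiv:2604.24692 — 4 statements merged into one kernel-verified Lean document; each statement's English description precedes it below -/
import Mathlib

section
/- Fix β > 0, B > 0 and d ∈ ℕ. Then there exists a constant C > 0, depending only on β, B and d, with the following property: for every n ≥ 1 and every pair of symmetric matrices W, W̃ ∈ ℝ^{n×n} with zero diagonal such that (i) |W_{ij}| ≤ B for all i,j, (ii) each row of W has at most d nonzero entries, and (iii) |W̃_{ij} − W_{ij}| ≤ ε·|W_{ij}| for all i,j, for some ε with 0 < ε ≤ 1, one has ‖H(β; W̃) − H(β; W)‖_F ≤ C·ε·√N, where N = #{(i,j) : W_{ij} ≠ 0} is the number of nonzero entries of W (twice the number of edges). -/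
open Matrix Real

/-- Diagonal part `D̃(β)` of the Bethe–Hessian: `D̃(β)_{ii} = Σ_j sinh²(β W_{ij})`. -/
noncomputable def betheDTilde {n : ℕ} (W : Matrix (Fin n) (Fin n) ℝ) (β : ℝ) :
    Matrix (Fin n) (Fin n) ℝ :=
  Matrix.diagonal (fun i => ∑ j, Real.sinh (β * W i j) ^ 2)

/-- Off-diagonal part `S(β)` of the Bethe–Hessian: `S(β)_{ij} = sinh(β W_{ij}) cosh(β W_{ij})`. -/
noncomputable def betheS {n : ℕ} (W : Matrix (Fin n) (Fin n) ℝ) (β : ℝ) :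
    Matrix (Fin n) (Fin n) ℝ :=
  Matrix.of fun i j => Real.sinh (β * W i j) * Real.cosh (β * W i j)

/-- The Bethe–Hessian `H(β) = I + D̃(β) − S(β)`. -/
noncomputable def betheH {n : ℕ} (W : Matrix (Fin n) (Fin n) ℝ) (β : ℝ) :
    Matrix (Fin n) (Fin n) ℝ :=
  1 + betheDTilde W β - betheS W β

/-- Frobenius norm of a real matrix. -/
noncomputable def frobNorm {n : ℕ} (A : Matrix (Fin n) (Fin n) ℝ) : ℝ :=
  Real.sqrt (∑ i, ∑ j, (A i j) ^ 2)

/-- Smallest eigenvalue of a real matrix: infimum of the set of (real) eigenvalues. -/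
noncomputable def lambdaMin {n : ℕ} (A : Matrix (Fin n) (Fin n) ℝ) : ℝ :=
  sInf {r : ℝ | ∃ v : Fin n → ℝ, v ≠ 0 ∧ A.mulVec v = r • v}

/-- Diagonal matrix `P(β)` with entries `(1 + D̃(β)_{ii})^{1/2}`. -/
noncomputable def betheP {n : ℕ} (W : Matrix (Fin n) (Fin n) ℝ) (β : ℝ) :
    Matrix (Fin n) (Fin n) ℝ :=
  Matrix.diagonal (fun i => Real.sqrt (1 + ∑ j, Real.sinh (β * W i j) ^ 2))

/-- The Bethe–Hessian Laplacian `L_BH(β) = I − P(β)⁻¹ S(β) P(β)⁻¹`. -/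
noncomputable def betheLBH {n : ℕ} (W : Matrix (Fin n) (Fin n) ℝ) (β : ℝ) :
    Matrix (Fin n) (Fin n) ℝ :=
  1 - (betheP W β)⁻¹ * betheS W β * (betheP W β)⁻¹


theorem lip_aux (f : ℝ → ℝ) (hf : ContDiff ℝ 1 f) (R : ℝ) :
    ∃ K > (0 : ℝ), ∀ x y : ℝ, |x| ≤ R → |y| ≤ R → |f y - f x| ≤ K * |y - x| := by
  have hc : Continuous (deriv f) := hf.continuous_deriv (le_refl _)
  obtain ⟨K, hK⟩ := (isCompact_Icc (a := -R) (b := R)).exists_bound_of_continuousOn hc.continuousOn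
  refine ⟨max K 1, by positivity, fun x y hx hy => ?_⟩
  have := (convex_Icc (-R) R).norm_image_sub_le_of_norm_deriv_le (f := f) (C := max K 1)
    (fun x _ => (hf.differentiable (by norm_num)) x)
    (fun x hx => (hK x hx).trans (le_max_left _ _)) (abs_le.mp hx) (abs_le.mp hy)
  simpa [Real.norm_eq_abs] using this

theorem sum_aux {n : ℕ} (d : ℕ) (W P Q : Matrix (Fin n) (Fin n) ℝ) (T : ℝ) (hT : 0 ≤ T)
    (hd : ∀ i, (Finset.univ.filter (fun j => W i j ≠ 0)).card ≤ d)
    (hP : ∀ i j, |P i j| ≤ if W i j ≠ 0 then T else 0)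
    (hQ : ∀ i j, |Q i j| ≤ if W i j ≠ 0 then T else 0) :
    ∑ i, ∑ j, ((Matrix.diagonal (fun i => ∑ j, P i j) - Q) i j) ^ 2
      ≤ (2 * d + 2) * T ^ 2 *
        ((Finset.univ.filter (fun p : Fin n × Fin n => W p.1 p.2 ≠ 0)).card : ℝ) := by
  have hN : ((Finset.univ.filter (fun p : Fin n × Fin n => W p.1 p.2 ≠ 0)).card : ℝ)
      = ∑ i, ((Finset.univ.filter (fun j => W i j ≠ 0)).card : ℝ) := by
    simp only [Finset.card_filter, Nat.cast_sum]
    rw [Fintype.sum_prod_type]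
  rw [hN, Finset.mul_sum]
  refine Finset.sum_le_sum fun i _ => ?_
  have hk : ((Finset.univ.filter (fun j => W i j ≠ 0)).card : ℝ) ≤ d := by exact_mod_cast hd i
  set k : ℝ := ((Finset.univ.filter (fun j => W i j ≠ 0)).card : ℝ) with hkdef
  have hk0 : 0 ≤ k := by positivity
  have h1 : |∑ j, P i j| ≤ k * T := by
    refine (Finset.abs_sum_le_sum_abs _ _).trans ((Finset.sum_le_sum fun j _ => hP i j).trans ?_)
    rw [← Finset.sum_filter, Finset.sum_const, nsmul_eq_mul]
  have h2 : ∑ j, (Q i j) ^ 2 ≤ k * T ^ 2 := by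
    have : ∀ j, (Q i j) ^ 2 ≤ if W i j ≠ 0 then T ^ 2 else 0 := by
      intro j
      have := hQ i j
      rw [← sq_abs]
      have h0 := abs_nonneg (Q i j)
      split_ifs at this ⊢ <;> nlinarith
    refine (Finset.sum_le_sum fun j _ => this j).trans ?_
    rw [← Finset.sum_filter, Finset.sum_const, nsmul_eq_mul]
  have h3 : (∑ j, P i j) ^ 2 ≤ d * T ^ 2 * k := by
    rw [← sq_abs]
    calc |∑ j, P i j| ^ 2 ≤ (k * T) ^ 2 := by gcongr
      _ = k * T ^ 2 * k := by ring
      _ ≤ d * T ^ 2 * k := by gcongr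
  have h4 : ∑ j, (Matrix.diagonal (fun i => ∑ j, P i j) i j) ^ 2 = (∑ j, P i j) ^ 2 := by
    rw [Finset.sum_eq_single i]
    · simp
    · intro b _ hb
      simp [Matrix.diagonal_apply_ne' _ hb]
    · simp
  calc _ ≤ ∑ j, (2 * (Matrix.diagonal (fun i => ∑ j, P i j) i j) ^ 2 + 2 * (Q i j) ^ 2) := by
        refine Finset.sum_le_sum fun j _ => ?_
        rw [Matrix.sub_apply]
        nlinarith [sq_nonneg (Matrix.diagonal (fun i => ∑ j, P i j) i j + Q i j)]
    _ = 2 * (∑ j, P i j) ^ 2 + 2 * ∑ j, (Q i j) ^ 2 := by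
        rw [Finset.sum_add_distrib, ← Finset.mul_sum, ← Finset.mul_sum, h4]
    _ ≤ _ := by nlinarith

/-- Perturbation of the Bethe-Hessian under edgewise-relative weight noise:
on bounded-weight, bounded-degree graphs,
‖H(β; W̃) - H(β; W)‖_F ≤ C·ε·√N where N is the number of nonzero entries of W. -/
theorem betheH_perturbation (β B : ℝ) (hβ : 0 < β) (hB : 0 < B) (d : ℕ) :
    ∃ C > (0 : ℝ), ∀ (n : ℕ), 1 ≤ n →
      ∀ (W Wt : Matrix (Fin n) (Fin n) ℝ),
        W.IsSymm → (∀ i, W i i = 0) → Wt.IsSymm → (∀ i, Wt i i = 0) →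
        (∀ i j, |W i j| ≤ B) →
        (∀ i, (Finset.univ.filter (fun j => W i j ≠ 0)).card ≤ d) →
        ∀ ε : ℝ, 0 < ε → ε ≤ 1 →
          (∀ i j, |Wt i j - W i j| ≤ ε * |W i j|) →
          frobNorm (betheH Wt β - betheH W β)
            ≤ C * ε * Real.sqrt
                ((Finset.univ.filter
                  (fun p : Fin n × Fin n => W p.1 p.2 ≠ 0)).card) := by
  obtain ⟨K1, hK1, h1⟩ := lip_aux (fun x => Real.sinh x ^ 2) (Real.contDiff_sinh.pow 2)
    (β * (2 * B))
  obtain ⟨K2, hK2, h2⟩ := lip_aux (fun x => Real.sinh x * Real.cosh x)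
    (Real.contDiff_sinh.mul Real.contDiff_cosh) (β * (2 * B))
  have hM : 0 < (K1 + K2) * (β * B) := by positivity
  refine ⟨(2 * d + 2) * ((K1 + K2) * (β * B)), by positivity, ?_⟩
  intro n _ W Wt _ _ _ _ hWB hd ε hε hε1 hW
  have key : ∀ (f : ℝ → ℝ) (K : ℝ), 0 < K → K ≤ K1 + K2 →
      (∀ x y : ℝ, |x| ≤ β * (2 * B) → |y| ≤ β * (2 * B) → |f y - f x| ≤ K * |y - x|) →
      ∀ i j, |f (β * Wt i j) - f (β * W i j)| ≤
        if W i j ≠ 0 then (K1 + K2) * (β * B) * ε else 0 := by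
    intro f K hK hKK hf i j
    have hw := hW i j
    have hb := hWB i j
    split_ifs with h
    · have a0 := abs_nonneg (W i j)
      have e1 : |Wt i j - W i j| ≤ ε * B := hw.trans (by gcongr)
      have e2 : |Wt i j| ≤ 2 * B := by
        have := abs_sub_abs_le_abs_sub (Wt i j) (W i j)
        nlinarith
      have := hf (β * W i j) (β * Wt i j)
        (by rw [abs_mul, abs_of_pos hβ]; gcongr; linarith)
        (by rw [abs_mul, abs_of_pos hβ]; gcongr)
      rw [← mul_sub, abs_mul, abs_of_pos hβ] at this
      calc _ ≤ _ := this
        _ ≤ (K1 + K2) * (β * (ε * B)) := by gcongr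
        _ = _ := by ring
    · push Not at h
      rw [h] at hw ⊢
      have : Wt i j = 0 := by simpa using hw
      simp [this]
  have hS := sum_aux d W
    (Matrix.of fun i j => Real.sinh (β * Wt i j) ^ 2 - Real.sinh (β * W i j) ^ 2)
    (Matrix.of fun i j => Real.sinh (β * Wt i j) * Real.cosh (β * Wt i j)
      - Real.sinh (β * W i j) * Real.cosh (β * W i j))
    ((K1 + K2) * (β * B) * ε) (by positivity) hd
    (fun i j => by simpa only [Matrix.of_apply] using key (fun x => Real.sinh x ^ 2) K1 hK1 (by linarith) h1 i j)
    (fun i j => by simpa only [Matrix.of_apply] using key (fun x => Real.sinh x * Real.cosh x) K2 hK2 (by linarith) h2 i j)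
  have hE : betheH Wt β - betheH W β = Matrix.diagonal (fun i => ∑ j,
      (Matrix.of fun i j => Real.sinh (β * Wt i j) ^ 2 - Real.sinh (β * W i j) ^ 2 :
        Matrix (Fin n) (Fin n) ℝ) i j) -
      (Matrix.of fun i j => Real.sinh (β * Wt i j) * Real.cosh (β * Wt i j)
      - Real.sinh (β * W i j) * Real.cosh (β * W i j)) := by
    ext i j
    by_cases hij : i = j
    · subst hij
      simp [betheH, betheDTilde, betheS, Finset.sum_sub_distrib]
      ring
    · simp [betheH, betheDTilde, betheS, hij]
      ring
  rw [frobNorm, hE]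
  apply Real.sqrt_le_iff.mpr
  refine ⟨by positivity, hS.trans ?_⟩
  rw [mul_pow _ (Real.sqrt _), Real.sq_sqrt (by positivity)]
  gcongr
  have hd0 : (0 : ℝ) ≤ d := by positivity
  have : (2 * (d : ℝ) + 2) ≤ (2 * d + 2) ^ 2 := by nlinarith
  calc _ ≤ (2 * (d : ℝ) + 2) ^ 2 * ((K1 + K2) * (β * B) * ε) ^ 2 := by gcongr
    _ = _ := by ring
end

section
/- Fix β > 0, B > 0 and d ∈ ℕ. Then there exists a constant C > 0, depending only on β, B and d, with the following property: for every n ≥ 1 and every pair of symmetric matrices W, W̃ ∈ ℝ^{n×n} with zero diagonal such that (i) |W_{ij}| ≤ B for all i,j, (ii) each row of W has at most d nonzero entries, and (iii) |W̃_{ij} − W_{ij}| ≤ ε·|W_{ij}| for all i,j, for some ε with 0 < ε ≤ 1, the smallest eigenvalues of the Bethe–Hessians satisfy |λ_min(H(β; W̃)) − λ_min(H(β; W))| ≤ C·ε·√N, where N = #{(i,j) : W_{ij} ≠ 0}. In particular, if λ_min(H(β; W)) = 0 (the Nishimori condition at β), then |λ_min(H(β; W̃))| ≤ C·ε·√N.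 -/
open Matrix Real

lemma sinh_lip_aux {T u : ℝ} (hu : |u| ≤ T) : |Real.sinh u| ≤ Real.cosh T * |u| := by
  have h := Convex.norm_image_sub_le_of_norm_deriv_le (f := Real.sinh) (C := Real.cosh T)
    (s := Set.Icc (-T) T) (x := 0) (y := u) (fun x _ => Real.differentiable_sinh x)
    (fun x hx => by
      rw [Real.deriv_sinh, Real.norm_eq_abs, abs_of_pos (Real.cosh_pos _), Real.cosh_le_cosh]
      exact (abs_le.2 ⟨hx.1, hx.2⟩).trans (le_abs_self T))
    (convex_Icc _ _) (by
      have := (abs_nonneg u).trans hu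
      constructor <;> linarith) (abs_le.1 hu)
  simpa using h

lemma sinh_sq_diff {T s t : ℝ} (h1 : |s - t| ≤ T) (h2 : |s + t| ≤ 2 * T) :
    |Real.sinh s ^ 2 - Real.sinh t ^ 2| ≤ Real.cosh (2 * T) * Real.cosh T * |s - t| := by
  have e : Real.sinh s ^ 2 - Real.sinh t ^ 2 = Real.sinh (s + t) * Real.sinh (s - t) := by
    rw [Real.sinh_add, Real.sinh_sub]
    linear_combination (Real.sinh t ^ 2) * Real.cosh_sq s + Real.sinh s ^ 2 * (-1) * Real.cosh_sq t
  rw [e, abs_mul, mul_assoc]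
  have hc : |Real.sinh (s + t)| ≤ Real.cosh (2 * T) := by
    have : |Real.sinh (s + t)| ≤ Real.cosh (s + t) := by
      refine abs_le_of_sq_le_sq ?_ (Real.cosh_pos _).le
      rw [Real.cosh_sq]; linarith
    refine this.trans (Real.cosh_le_cosh.2 (h2.trans (le_abs_self _)))
  exact mul_le_mul hc (sinh_lip_aux h1) (abs_nonneg _) (Real.cosh_pos _).le

lemma sinh_cosh_diff {T s t : ℝ} (h1 : |s - t| ≤ T) (h2 : |s + t| ≤ 2 * T) :
    |Real.sinh s * Real.cosh s - Real.sinh t * Real.cosh t|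
      ≤ Real.cosh (2 * T) * Real.cosh T * |s - t| := by
  have e : Real.sinh s * Real.cosh s - Real.sinh t * Real.cosh t
      = Real.cosh (s + t) * Real.sinh (s - t) := by
    rw [Real.cosh_add, Real.sinh_sub]
    linear_combination (Real.sinh t * Real.cosh t) * Real.cosh_sq s
      - Real.sinh s * Real.cosh s * Real.cosh_sq t
  rw [e, abs_mul, mul_assoc, abs_of_pos (Real.cosh_pos _)]
  exact mul_le_mul (Real.cosh_le_cosh.2 (h2.trans (le_abs_self _))) (sinh_lip_aux h1)
    (abs_nonneg _) (Real.cosh_pos _).le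

lemma lambdaMin_spec {n : ℕ} (hn : 1 ≤ n) (A : Matrix (Fin n) (Fin n) ℝ) (hA : A.IsSymm) :
    (∃ v : Fin n → ℝ, v ≠ 0 ∧ A.mulVec v = lambdaMin A • v) ∧
    ∀ x : Fin n → ℝ, lambdaMin A * (x ⬝ᵥ x) ≤ x ⬝ᵥ A.mulVec x := by
  set S := {r : ℝ | ∃ v : Fin n → ℝ, v ≠ 0 ∧ A.mulVec v = r • v} with hS
  have hfin : S.Finite := by
    refine (Module.End.finite_hasEigenvalue (Matrix.toLin' A)).subset ?_
    rintro r ⟨v, hv, h⟩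
    exact Module.End.hasEigenvalue_of_hasEigenvector (x := v)
      ⟨Module.End.mem_eigenspace_iff.2 (by simpa using h), hv⟩
  have key : ∀ (M : Matrix (Fin n) (Fin n) ℝ) (hM : M.IsHermitian) (i : Fin n),
      ∃ v : Fin n → ℝ, v ≠ 0 ∧ M.mulVec v = hM.eigenvalues i • v := by
    intro M hM i
    refine ⟨_, ?_, hM.mulVec_eigenvectorBasis i⟩
    intro h0
    apply hM.eigenvectorBasis.orthonormal.ne_zero i
    ext j
    exact congrFun h0 j
  have hH : A.IsHermitian := by
    rw [Matrix.IsHermitian, Matrix.conjTranspose_eq_transpose_of_trivial]; exact hA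
  have hne : S.Nonempty := ⟨_, key A hH ⟨0, hn⟩⟩
  have hmem : sInf S ∈ S := hne.csInf_mem hfin
  refine ⟨hmem, fun x => ?_⟩
  have hB : (A - lambdaMin A • (1 : Matrix (Fin n) (Fin n) ℝ)).IsHermitian := by
    rw [Matrix.IsHermitian, Matrix.conjTranspose_eq_transpose_of_trivial]
    simp [hA.eq]
  have hps : (A - lambdaMin A • (1 : Matrix (Fin n) (Fin n) ℝ)).PosSemidef := by
    rw [hB.posSemidef_iff_eigenvalues_nonneg]
    intro i
    obtain ⟨v, hv, h⟩ := key _ hB i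
    have : hB.eigenvalues i + lambdaMin A ∈ S := by
      refine ⟨v, hv, ?_⟩
      rw [Matrix.sub_mulVec, Matrix.smul_mulVec, Matrix.one_mulVec, sub_eq_iff_eq_add] at h
      rw [h, add_smul]
    have h2 := csInf_le hfin.bddBelow this
    change lambdaMin A ≤ _ at h2
    simp only [Pi.zero_apply]
    linarith
  have := hps.dotProduct_mulVec_nonneg x
  rw [Matrix.sub_mulVec, Matrix.smul_mulVec, Matrix.one_mulVec, dotProduct_sub,
    dotProduct_smul] at this
  simp only [star_trivial, smul_eq_mul] at this
  linarith

lemma lambdaMin_le_add {n : ℕ} (hn : 1 ≤ n) (A A' : Matrix (Fin n) (Fin n) ℝ) (hA : A.IsSymm)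
    (hA' : A'.IsSymm) (K : ℝ)
    (hK : ∀ x : Fin n → ℝ, x ⬝ᵥ A'.mulVec x ≤ x ⬝ᵥ A.mulVec x + K * (x ⬝ᵥ x)) :
    lambdaMin A' ≤ lambdaMin A + K := by
  obtain ⟨v, hv, h⟩ := (lambdaMin_spec hn A hA).1
  have h1 := (lambdaMin_spec hn A' hA').2 v
  have h2 := hK v
  rw [h, dotProduct_smul, smul_eq_mul] at h2
  have hp : 0 < v ⬝ᵥ v := by
    have := Matrix.dotProduct_star_self_pos_iff.2 hv
    simpa using this
  exact le_of_mul_le_mul_right (by linarith) hp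

lemma betheH_isSymm {n : ℕ} (W : Matrix (Fin n) (Fin n) ℝ) (β : ℝ) (hW : W.IsSymm) :
    (betheH W β).IsSymm := by
  ext i j
  have h1 : (betheS W β)ᵀ = betheS W β := by
    ext i j; simp [betheS, hW.apply]
  have : (betheH W β)ᵀ = betheH W β := by
    simp [betheH, h1, betheDTilde]
  rw [this]

lemma betheH_quad {n : ℕ} (W : Matrix (Fin n) (Fin n) ℝ) (β : ℝ) (x : Fin n → ℝ) :
    x ⬝ᵥ (betheH W β).mulVec x = x ⬝ᵥ x + ∑ i, ∑ j, (Real.sinh (β * W i j) ^ 2 * x i ^ 2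
      - Real.sinh (β * W i j) * Real.cosh (β * W i j) * (x i * x j)) := by
  rw [betheH, Matrix.sub_mulVec, Matrix.add_mulVec, Matrix.one_mulVec, dotProduct_sub,
    dotProduct_add, add_sub_assoc]
  congr 1
  simp only [Finset.sum_sub_distrib]
  congr 1
  · simp only [betheDTilde, dotProduct, Matrix.mulVec_diagonal]
    refine Finset.sum_congr rfl fun i _ => ?_
    rw [← Finset.sum_mul]; ring
  · simp only [betheS, dotProduct, Matrix.mulVec, Matrix.of_apply, Finset.mul_sum]
    refine Finset.sum_congr rfl fun i _ => Finset.sum_congr rfl fun j _ => ?_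
    ring

lemma quad_diff {n d : ℕ} (W : Matrix (Fin n) (Fin n) ℝ) (hW : W.IsSymm)
    (hd : ∀ i, (Finset.univ.filter (fun j => W i j ≠ 0)).card ≤ d)
    (a b : Fin n → Fin n → ℝ) (L : ℝ) (hL : 0 ≤ L)
    (ha : ∀ i j, |a i j| ≤ L * (if W i j ≠ 0 then 1 else 0))
    (hb : ∀ i j, |b i j| ≤ L * (if W i j ≠ 0 then 1 else 0)) (x : Fin n → ℝ) :
    |∑ i, ∑ j, (a i j * x i ^ 2 - b i j * (x i * x j))| ≤ 2 * L * d * (x ⬝ᵥ x) := by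
  have hrow : ∀ i, ∑ j, (if W i j ≠ 0 then (1 : ℝ) else 0) ≤ d := by
    intro i
    rw [Finset.sum_boole]
    exact_mod_cast hd i
  have h1 : ∑ i, ∑ j, (if W i j ≠ 0 then (1 : ℝ) else 0) * x i ^ 2 ≤ d * (x ⬝ᵥ x) := by
    rw [dotProduct, Finset.mul_sum]
    refine Finset.sum_le_sum fun i _ => ?_
    rw [← Finset.sum_mul, ← sq]
    exact mul_le_mul_of_nonneg_right (hrow i) (sq_nonneg _)
  have h2 : ∑ i, ∑ j, (if W i j ≠ 0 then (1 : ℝ) else 0) * x j ^ 2 ≤ d * (x ⬝ᵥ x) := by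
    rw [Finset.sum_comm]
    refine le_trans (le_of_eq ?_) h1
    refine Finset.sum_congr rfl fun i _ => Finset.sum_congr rfl fun j _ => ?_
    rw [hW.apply]
  have h3 : |∑ i, ∑ j, (a i j * x i ^ 2 - b i j * (x i * x j))| ≤
      ∑ i, ∑ j, ((3 / 2 * L) * ((if W i j ≠ 0 then (1 : ℝ) else 0) * x i ^ 2)
        + (1 / 2 * L) * ((if W i j ≠ 0 then (1 : ℝ) else 0) * x j ^ 2)) := by
    refine (Finset.abs_sum_le_sum_abs _ _).trans (Finset.sum_le_sum fun i _ => ?_)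
    refine (Finset.abs_sum_le_sum_abs _ _).trans (Finset.sum_le_sum fun j _ => ?_)
    have hA := ha i j
    have hB := hb i j
    set c : ℝ := if W i j ≠ 0 then (1 : ℝ) else 0
    have hc : 0 ≤ L * c := (abs_nonneg _).trans hA
    have e1 : |a i j * x i ^ 2| ≤ L * c * x i ^ 2 := by
      rw [abs_mul, abs_of_nonneg (sq_nonneg (x i))]
      exact mul_le_mul_of_nonneg_right hA (sq_nonneg _)
    have e2 : |x i * x j| ≤ (x i ^ 2 + x j ^ 2) / 2 := by
      rw [abs_le]; constructor <;> nlinarith [sq_nonneg (x i - x j), sq_nonneg (x i + x j)]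
    have e3 : |b i j * (x i * x j)| ≤ L * c * ((x i ^ 2 + x j ^ 2) / 2) := by
      rw [abs_mul]
      exact mul_le_mul hB e2 (abs_nonneg _) hc
    have := abs_sub (a i j * x i ^ 2) (b i j * (x i * x j))
    linarith
  refine h3.trans ?_
  simp only [Finset.sum_add_distrib, ← Finset.mul_sum]
  nlinarith [mul_le_mul_of_nonneg_left h1 hL, mul_le_mul_of_nonneg_left h2 hL]

/-- Stability of the smallest eigenvalue of the Bethe-Hessian under
edgewise-relative weight noise, with the Nishimori case as a consequence. -/
theorem lambdaMin_betheH_perturbation (β B : ℝ) (hβ : 0 < β) (hB : 0 < B) (d : ℕ) :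
    ∃ C > (0 : ℝ), ∀ (n : ℕ), 1 ≤ n →
      ∀ (W Wt : Matrix (Fin n) (Fin n) ℝ),
        W.IsSymm → (∀ i, W i i = 0) → Wt.IsSymm → (∀ i, Wt i i = 0) →
        (∀ i j, |W i j| ≤ B) →
        (∀ i, (Finset.univ.filter (fun j => W i j ≠ 0)).card ≤ d) →
        ∀ ε : ℝ, 0 < ε → ε ≤ 1 →
          (∀ i j, |Wt i j - W i j| ≤ ε * |W i j|) →
          (|lambdaMin (betheH Wt β) - lambdaMin (betheH W β)|
              ≤ C * ε * Real.sqrt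
                  ((Finset.univ.filter
                    (fun p : Fin n × Fin n => W p.1 p.2 ≠ 0)).card)) ∧
          (lambdaMin (betheH W β) = 0 →
            |lambdaMin (betheH Wt β)|
              ≤ C * ε * Real.sqrt
                  ((Finset.univ.filter
                    (fun p : Fin n × Fin n => W p.1 p.2 ≠ 0)).card)) := by
  set T : ℝ := 2 * (β * B) with hT
  set M : ℝ := Real.cosh (2 * T) * Real.cosh T with hM
  have hMpos : 0 < M := mul_pos (Real.cosh_pos _) (Real.cosh_pos _)
  have hβB : 0 < β * B := mul_pos hβ hB
  refine ⟨2 * (M * (β * B)) * d + 1, by positivity, ?_⟩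
  intro n hn W Wt hW _ hWt _ hWB hd ε hε hε1 hdiff
  have main : |lambdaMin (betheH Wt β) - lambdaMin (betheH W β)|
      ≤ (2 * (M * (β * B)) * d + 1) * ε * Real.sqrt
          ((Finset.univ.filter (fun p : Fin n × Fin n => W p.1 p.2 ≠ 0)).card) := by
    by_cases hN : (Finset.univ.filter (fun p : Fin n × Fin n => W p.1 p.2 ≠ 0)).card = 0
    · have hz : ∀ i j, W i j = 0 := by
        intro i j
        rw [Finset.card_eq_zero, Finset.filter_eq_empty_iff] at hN
        simpa using hN (Finset.mem_univ (i, j))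
      have : Wt = W := by
        ext i j
        have := hdiff i j
        rw [hz i j, abs_zero, mul_zero, abs_nonpos_iff, sub_zero] at this
        rw [this, hz]
      rw [this, hN]; simp
    · have hs : (1 : ℝ) ≤ Real.sqrt
          ((Finset.univ.filter (fun p : Fin n × Fin n => W p.1 p.2 ≠ 0)).card) := by
        rw [Real.one_le_sqrt]
        exact_mod_cast Nat.one_le_iff_ne_zero.2 hN
      have hsd : ∀ i j, |β * Wt i j - β * W i j|
          ≤ (β * B) * ε * (if W i j ≠ 0 then 1 else 0) := by
        intro i j
        rw [← mul_sub, abs_mul, abs_of_pos hβ, mul_assoc, mul_assoc]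
        refine mul_le_mul_of_nonneg_left ((hdiff i j).trans ?_) hβ.le
        split_ifs with h
        · have := mul_le_mul_of_nonneg_left (hWB i j) hε.le
          linarith
        · push Not at h
          simp [h]
      have hs1 : ∀ i j, |β * Wt i j - β * W i j| ≤ β * B := by
        intro i j
        refine (hsd i j).trans ?_
        rw [mul_assoc]
        refine mul_le_of_le_one_right hβB.le ?_
        split_ifs <;> simp [hε1]
      have hs0 : ∀ i j, |β * W i j| ≤ β * B := by
        intro i j
        rw [abs_mul, abs_of_pos hβ]
        exact mul_le_mul_of_nonneg_left (hWB i j) hβ.le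
      have hc1 : ∀ i j, |β * Wt i j - β * W i j| ≤ T := fun i j => by
        have := hs1 i j
        linarith
      have hc2 : ∀ i j, |β * Wt i j + β * W i j| ≤ 2 * T := fun i j => by
        have h1 := abs_le.1 (hs1 i j)
        have h2 := abs_le.1 (hs0 i j)
        rw [abs_le]
        constructor <;> linarith [h1.1, h1.2, h2.1, h2.2]
      have hscale : ∀ i j, M * |β * Wt i j - β * W i j|
          ≤ (M * (β * B) * ε) * (if W i j ≠ 0 then 1 else 0) := fun i j => by
        have := mul_le_mul_of_nonneg_left (hsd i j) hMpos.le
        linarith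
      have hq : ∀ x : Fin n → ℝ,
          |x ⬝ᵥ (betheH Wt β).mulVec x - x ⬝ᵥ (betheH W β).mulVec x|
            ≤ 2 * (M * (β * B) * ε) * d * (x ⬝ᵥ x) := by
        intro x
        have := quad_diff W hW hd
          (fun i j => Real.sinh (β * Wt i j) ^ 2 - Real.sinh (β * W i j) ^ 2)
          (fun i j => Real.sinh (β * Wt i j) * Real.cosh (β * Wt i j)
            - Real.sinh (β * W i j) * Real.cosh (β * W i j))
          (M * (β * B) * ε) (by positivity)
          (fun i j => (sinh_sq_diff (hc1 i j) (hc2 i j)).trans (hscale i j))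
          (fun i j => (sinh_cosh_diff (hc1 i j) (hc2 i j)).trans (hscale i j)) x
        rw [betheH_quad, betheH_quad, add_sub_add_left_eq_sub]
        refine le_trans (le_of_eq ?_) this
        congr 1
        simp only [← Finset.sum_sub_distrib]
        refine Finset.sum_congr rfl fun i _ => Finset.sum_congr rfl fun j _ => ?_
        ring
      have hle : |lambdaMin (betheH Wt β) - lambdaMin (betheH W β)|
          ≤ 2 * (M * (β * B) * ε) * d := by
        have h1 := lambdaMin_le_add hn _ _ (betheH_isSymm W β hW) (betheH_isSymm Wt β hWt)
          (2 * (M * (β * B) * ε) * d) (fun x => by linarith [(abs_le.1 (hq x)).2])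
        have h2 := lambdaMin_le_add hn _ _ (betheH_isSymm Wt β hWt) (betheH_isSymm W β hW)
          (2 * (M * (β * B) * ε) * d) (fun x => by linarith [(abs_le.1 (hq x)).1])
        rw [abs_le]
        constructor <;> linarith
      refine hle.trans ?_
      have hpos : 0 ≤ (2 * (M * (β * B)) * d + 1) * ε := by positivity
      have := le_mul_of_one_le_right hpos hs
      linarith
  refine ⟨main, fun h0 => ?_⟩
  rw [h0, sub_zero] at main
  exact main
end

section
/- Let n ≥ 1 and let W ∈ ℝ^{n×n} be a symmetric real matrix with zero diagonal, with Bethe–Hessian H(β). Suppose there exists β₁ > 0 with λ_min(H(β₁)) < 0. Then there exists a Nishimori temperature β_N ∈ (0, β₁) satisfying the singularity condition λ_min(H(β_N)) = 0. (This follows from the intermediate value theorem, since λ_min(H(0)) = 1 > 0 as H(0) = I, and β ↦ λ_min(H(β)) is continuous.) -/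
open Matrix Real

theorem betheH_zero {n : ℕ} (W : Matrix (Fin n) (Fin n) ℝ) : betheH W 0 = 1 := by
  ext i j
  simp [betheH, betheDTilde, betheS]

theorem betheH_isHermitian {n : ℕ} (W : Matrix (Fin n) (Fin n) ℝ) (hW : W.IsSymm) (β : ℝ) :
    (betheH W β).IsHermitian := by
  have hS : (betheS W β).IsHermitian := by
    ext i j
    have : W j i = W i j := hW.apply i j
    simp [betheS, this]
  have hD : (betheDTilde W β).IsHermitian := by
    unfold betheDTilde
    rw [Matrix.IsHermitian, Matrix.diagonal_conjTranspose]
    rfl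
  exact (Matrix.isHermitian_one.add hD).sub hS

theorem betheH_continuous {n : ℕ} (W : Matrix (Fin n) (Fin n) ℝ) :
    Continuous (fun β => betheH W β) := by
  unfold betheH betheDTilde betheS
  refine Continuous.sub (Continuous.add continuous_const ?_) ?_
  · refine Continuous.matrix_diagonal ?_
    fun_prop
  · refine continuous_matrix fun i j => ?_
    simp only [Matrix.of_apply]
    fun_prop

theorem betheQ_continuous {n : ℕ} (W : Matrix (Fin n) (Fin n) ℝ) :
    Continuous (fun p : ℝ × (Fin n → ℝ) => p.2 ⬝ᵥ (betheH W p.1 *ᵥ p.2)) := by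
  have h : Continuous (fun p : ℝ × (Fin n → ℝ) => betheH W p.1) :=
    (betheH_continuous W).comp continuous_fst
  exact continuous_snd.dotProduct (h.matrix_mulVec continuous_snd)

/-- Existence of a Nishimori temperature: if λ_min(H(β₁)) < 0 for some β₁ > 0,
then there exists β_N ∈ (0, β₁) with λ_min(H(β_N)) = 0. -/
theorem exists_nishimori_temperature {n : ℕ} (hn : 1 ≤ n)
    (W : Matrix (Fin n) (Fin n) ℝ) (hW : W.IsSymm) (hdiag : ∀ i, W i i = 0)
    (β₁ : ℝ) (hβ₁ : 0 < β₁) (hneg : lambdaMin (betheH W β₁) < 0) :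
    ∃ βN : ℝ, 0 < βN ∧ βN < β₁ ∧ lambdaMin (betheH W βN) = 0 := by
  have hpos : ∀ w : Fin n → ℝ, w ≠ 0 → 0 < w ⬝ᵥ w := fun w hw => by
    have h := Matrix.dotProduct_star_self_pos_iff.2 hw
    simpa using h
  -- a direction with negative quadratic form at `β₁`
  obtain ⟨v₁, hv₁, hq₁⟩ : ∃ v : Fin n → ℝ, v ≠ 0 ∧ v ⬝ᵥ (betheH W β₁ *ᵥ v) < 0 := by
    have hne : {r : ℝ | ∃ v : Fin n → ℝ, v ≠ 0 ∧ (betheH W β₁).mulVec v = r • v}.Nonempty := by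
      by_contra h
      rw [Set.not_nonempty_iff_eq_empty] at h
      rw [lambdaMin, h, Real.sInf_empty] at hneg
      exact lt_irrefl _ hneg
    obtain ⟨r, ⟨v, hv, hr⟩, hr0⟩ := exists_lt_of_csInf_lt hne hneg
    refine ⟨v, hv, ?_⟩
    rw [hr, dotProduct_smul, smul_eq_mul]
    exact mul_neg_of_neg_of_pos hr0 (hpos v hv)
  let T : Set (ℝ × (Fin n → ℝ)) :=
    (Set.Icc 0 β₁ ×ˢ Metric.sphere 0 1) ∩ {p | p.2 ⬝ᵥ (betheH W p.1 *ᵥ p.2) ≤ 0}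
  have hTc : IsCompact T :=
    (isCompact_Icc.prod (isCompact_sphere 0 1)).inter_right
      (isClosed_le (betheQ_continuous W) continuous_const)
  have hmem : ∀ (β : ℝ) (w : Fin n → ℝ), 0 ≤ β → β ≤ β₁ → w ≠ 0 →
      w ⬝ᵥ (betheH W β *ᵥ w) ≤ 0 → (β, ‖w‖⁻¹ • w) ∈ T := by
    intro β w h0 h1 hw hq
    have hn0 : ‖w‖ ≠ 0 := norm_ne_zero_iff.2 hw
    refine ⟨⟨⟨h0, h1⟩, ?_⟩, ?_⟩
    · simp [norm_smul, hn0]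
    · simp only [Set.mem_setOf_eq, mulVec_smul, dotProduct_smul, smul_dotProduct, smul_eq_mul]
      have : 0 ≤ ‖w‖⁻¹ := by positivity
      exact mul_nonpos_of_nonneg_of_nonpos this (mul_nonpos_of_nonneg_of_nonpos this hq)
  obtain ⟨⟨b, v⟩, ⟨⟨⟨hb0, hb1⟩, hv1⟩, hq⟩, hmin⟩ :=
    hTc.exists_isMinOn ⟨_, hmem β₁ v₁ hβ₁.le le_rfl hv₁ hq₁.le⟩ continuous_fst.continuousOn
  simp only [Set.mem_setOf_eq] at hb0 hb1 hv1 hq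
  have hv0 : v ≠ 0 := by
    rintro rfl
    simp at hv1
  have hbpos : 0 < b := by
    rcases hb0.lt_or_eq with h | h
    · exact h
    · rw [← h, betheH_zero, one_mulVec] at hq
      exact absurd (hpos v hv0) (not_lt.2 hq)
  have hnn : ∀ w : Fin n → ℝ, 0 ≤ w ⬝ᵥ (betheH W b *ᵥ w) := by
    intro w
    by_contra! hlt
    have hw : w ≠ 0 := by
      rintro rfl
      simp at hlt
    have hc : Continuous (fun β : ℝ => w ⬝ᵥ (betheH W β *ᵥ w)) :=
      (betheQ_continuous W).comp (continuous_id.prodMk continuous_const)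
    have h0 : 0 < w ⬝ᵥ (betheH W 0 *ᵥ w) := by
      rw [betheH_zero, one_mulVec]
      exact hpos w hw
    obtain ⟨c, hc1, hc2⟩ := intermediate_value_Ioo' hb0 hc.continuousOn ⟨hlt, h0⟩
    have := hmin (hmem c w hc1.1.le (hc1.2.le.trans hb1) hw hc2.le)
    simp only [Set.mem_setOf_eq] at this
    exact absurd hc1.2 (not_lt.2 this)
  have hpsd : (betheH W b).PosSemidef :=
    Matrix.PosSemidef.of_dotProduct_mulVec_nonneg (betheH_isHermitian W hW b)
      (fun w => by simpa using hnn w)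
  have hker : betheH W b *ᵥ v = 0 := by
    refine (hpsd.dotProduct_mulVec_zero_iff v).1 ?_
    simpa using le_antisymm hq (hnn v)
  refine ⟨b, hbpos, ?_, ?_⟩
  · refine lt_of_le_of_ne hb1 ?_
    rintro rfl
    exact absurd hq₁ (not_lt.2 (hnn v₁))
  · refine IsLeast.csInf_eq ⟨⟨v, hv0, by simpa using hker⟩, ?_⟩
    rintro r ⟨w, hw, hr⟩
    have h := hnn w
    rw [hr, dotProduct_smul, smul_eq_mul] at h
    exact nonneg_of_mul_nonneg_left h (hpos w hw)
end

section
/- (Stability of the Nishimori temperature under noise.) Let n ≥ 1 and let W ∈ ℝ^{n×n} be a symmetric real matrix with zero diagonal, with Bethe–Hessian H(β; W), and let f(β) = λ_min(H(β; W)). Suppose β_N > 0 satisfies f(β_N) = 0, that f is differentiable at β_N, and that f'(β_N) ≠ 0 (the non-degeneracy condition). Then there exist constants C > 0 and ε₀ > 0 such that for every ε with 0 < ε ≤ ε₀ and every symmetric matrix W̃ ∈ ℝ^{n×n} with zero diagonal satisfying the edgewise perturbation bound |W̃_{ij} − W_{ij}| ≤ ε·|W_{ij}| for all i,j, there exists β̃_N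 > 0 with λ_min(H(β̃_N; W̃)) = 0 and |β̃_N − β_N| ≤ C·ε. -/
open Matrix Real

lemma lm_finite {n : ℕ} (A : Matrix (Fin n) (Fin n) ℝ) :
    {r : ℝ | ∃ v : Fin n → ℝ, v ≠ 0 ∧ A.mulVec v = r • v}.Finite := by
  refine (Module.End.finite_hasEigenvalue (Matrix.toLin' A)).subset ?_
  rintro r ⟨v, hv, h⟩
  refine Module.End.hasEigenvalue_of_hasEigenvector (x := v) ⟨?_, hv⟩
  rw [Module.End.mem_eigenspace_iff, Matrix.toLin'_apply, h]

lemma herm_eig {n : ℕ} {A : Matrix (Fin n) (Fin n) ℝ} (hA : A.IsHermitian) (i : Fin n) :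
    ∃ v : Fin n → ℝ, v ≠ 0 ∧ A.mulVec v = hA.eigenvalues i • v := by
  refine ⟨_, ?_, hA.mulVec_eigenvectorBasis i⟩
  intro h
  have h1 := hA.eigenvectorBasis.orthonormal.ne_zero i
  apply h1
  ext j
  exact congrFun h j

lemma lm_mem {n : ℕ} (hn : 1 ≤ n) {A : Matrix (Fin n) (Fin n) ℝ} (hA : A.IsSymm) :
    ∃ v : Fin n → ℝ, v ≠ 0 ∧ A.mulVec v = lambdaMin A • v := by
  have hA' : A.IsHermitian := by
    rw [Matrix.IsHermitian, Matrix.conjTranspose_eq_transpose_of_trivial]; exact hA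
  have hne : {r : ℝ | ∃ v : Fin n → ℝ, v ≠ 0 ∧ A.mulVec v = r • v}.Nonempty :=
    ⟨_, herm_eig hA' ⟨0, hn⟩⟩
  exact hne.csInf_mem (lm_finite A)

lemma lm_le {n : ℕ} {A : Matrix (Fin n) (Fin n) ℝ} (hA : A.IsSymm) (x : Fin n → ℝ) :
    lambdaMin A * (x ⬝ᵥ x) ≤ x ⬝ᵥ (A *ᵥ x) := by
  have hB : (A - lambdaMin A • (1 : Matrix (Fin n) (Fin n) ℝ)).IsHermitian := by
    rw [Matrix.IsHermitian, Matrix.conjTranspose_eq_transpose_of_trivial]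
    simp [hA.eq]
  have hps : (A - lambdaMin A • (1 : Matrix (Fin n) (Fin n) ℝ)).PosSemidef := by
    rw [hB.posSemidef_iff_eigenvalues_nonneg]
    intro i
    obtain ⟨v, hv, h⟩ := herm_eig hB i
    have : lambdaMin A ≤ hB.eigenvalues i + lambdaMin A := by
      refine csInf_le (lm_finite A).bddBelow ⟨v, hv, ?_⟩
      rw [Matrix.sub_mulVec, Matrix.smul_mulVec, Matrix.one_mulVec] at h
      rw [add_smul, ← h]; simp
    simpa using this
  have := hps.dotProduct_mulVec_nonneg x
  rw [Matrix.sub_mulVec, Matrix.smul_mulVec, Matrix.one_mulVec, dotProduct_sub,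
    dotProduct_smul] at this
  simp at this
  linarith

lemma lm_lip1 {n : ℕ} (hn : 1 ≤ n) {A B : Matrix (Fin n) (Fin n) ℝ} (hA : A.IsSymm)
    (hB : B.IsSymm) {δ : ℝ} (h : ∀ i j, |B i j - A i j| ≤ δ) :
    lambdaMin B ≤ lambdaMin A + n * δ := by
  obtain ⟨v, hv, hev⟩ := lm_mem hn hA
  have h1 := lm_le hB v
  have hδ : 0 ≤ δ := (abs_nonneg _).trans (h ⟨0, hn⟩ ⟨0, hn⟩)
  have hpos : 0 < v ⬝ᵥ v := by
    refine lt_of_le_of_ne (Finset.sum_nonneg fun i _ => mul_self_nonneg _) ?_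
    intro h0
    exact hv (dotProduct_self_eq_zero.1 h0.symm)
  have h2 : v ⬝ᵥ (B *ᵥ v) = lambdaMin A * (v ⬝ᵥ v) + v ⬝ᵥ ((B - A) *ᵥ v) := by
    rw [Matrix.sub_mulVec, dotProduct_sub, hev, dotProduct_smul]
    simp
  have h3 : v ⬝ᵥ ((B - A) *ᵥ v) ≤ δ * (∑ i, |v i|) ^ 2 := by
    rw [sq, Finset.sum_mul_sum, Finset.mul_sum]
    simp only [dotProduct, mulVec, Finset.mul_sum]
    refine Finset.sum_le_sum fun i _ => Finset.sum_le_sum fun j _ => ?_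
    refine (le_abs_self _).trans ?_
    rw [abs_mul, abs_mul, Matrix.sub_apply]
    have := mul_le_mul_of_nonneg_right (h i j) (mul_nonneg (abs_nonneg (v i)) (abs_nonneg (v j)))
    linarith
  have h4 : (∑ i, |v i|) ^ 2 ≤ n * (v ⬝ᵥ v) := by
    have := sq_sum_le_card_mul_sum_sq (s := Finset.univ) (f := fun i => |v i|)
    simpa [dotProduct, sq] using this
  have h5 := mul_le_mul_of_nonneg_left h4 hδ
  refine le_of_mul_le_mul_right ?_ hpos
  nlinarith

lemma lm_lip {n : ℕ} (hn : 1 ≤ n) {A B : Matrix (Fin n) (Fin n) ℝ} (hA : A.IsSymm)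
    (hB : B.IsSymm) {δ : ℝ} (h : ∀ i j, |B i j - A i j| ≤ δ) :
    |lambdaMin B - lambdaMin A| ≤ n * δ := by
  have h1 := lm_lip1 hn hA hB h
  have h2 := lm_lip1 hn hB hA (δ := δ) (fun i j => by rw [abs_sub_comm]; exact h i j)
  rw [abs_le]; constructor <;> linarith

lemma betheH_symm {n : ℕ} {W : Matrix (Fin n) (Fin n) ℝ} (hW : W.IsSymm) (β : ℝ) :
    (betheH W β).IsSymm := by
  have : (betheS W β).IsSymm := by
    ext i j
    simp [betheS, hW.apply i j]
  rw [Matrix.IsSymm] at this ⊢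
  simp [betheH, betheDTilde, this]

lemma lm_cont {n : ℕ} (hn : 1 ≤ n) {W : Matrix (Fin n) (Fin n) ℝ} (hW : W.IsSymm) :
    Continuous (fun β : ℝ => lambdaMin (betheH W β)) := by
  rw [continuous_iff_continuousAt]
  intro b
  have hc : ∀ i j, Continuous (fun β : ℝ => betheH W β i j) := by
    intro i j
    by_cases hij : i = j
    · subst hij
      simp only [betheH, betheDTilde, betheS, Matrix.sub_apply, Matrix.add_apply,
        Matrix.diagonal_apply_eq, Matrix.of_apply]
      fun_prop
    · simp only [betheH, betheDTilde, betheS, Matrix.sub_apply, Matrix.add_apply,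
        Matrix.diagonal_apply_ne _ hij, Matrix.of_apply]
      fun_prop
  rw [Metric.continuousAt_iff']
  intro e he
  have hn0 : (0 : ℝ) < n := by exact_mod_cast hn
  have hall : ∀ᶠ x in nhds b, ∀ i j, |betheH W x i j - betheH W b i j| < e / (2 * n) := by
    rw [Filter.eventually_all]; intro i
    rw [Filter.eventually_all]; intro j
    have := Metric.continuousAt_iff'.1 ((hc i j).continuousAt (x := b)) (e / (2 * n)) (by positivity)
    simpa [Real.dist_eq] using this
  filter_upwards [hall] with x hx
  rw [Real.dist_eq]
  have := lm_lip hn (betheH_symm hW b) (betheH_symm hW x) (fun i j => (hx i j).le)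
  have h2 : (n : ℝ) * (e / (2 * n)) = e / 2 := by field_simp
  linarith

lemma entry_lip (R : ℝ) : ∃ K : ℝ, 0 < K ∧ ∀ s t : ℝ, |s| ≤ R → |t| ≤ R →
    |Real.sinh s ^ 2 - Real.sinh t ^ 2| ≤ K * |s - t| ∧
    |Real.sinh s * Real.cosh s - Real.sinh t * Real.cosh t| ≤ K * |s - t| := by
  have key : ∀ g : ℝ → ℝ, ContDiff ℝ 1 g → ∃ K : ℝ, 0 ≤ K ∧ ∀ s t : ℝ, |s| ≤ R → |t| ≤ R →
      |g s - g t| ≤ K * |s - t| := by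
    intro g hg
    obtain ⟨K, hK⟩ := (hg.contDiffOn (s := Set.Icc (-R) R)).exists_lipschitzOnWith
      one_ne_zero (convex_Icc _ _) isCompact_Icc
    refine ⟨K, K.2, fun s t hs ht => ?_⟩
    have := hK.dist_le_mul s (abs_le.1 hs) t (abs_le.1 ht)
    simpa [Real.dist_eq] using this
  obtain ⟨K1, h1, H1⟩ := key (fun s => Real.sinh s ^ 2) (by fun_prop)
  obtain ⟨K2, h2, H2⟩ := key (fun s => Real.sinh s * Real.cosh s) (by fun_prop)
  refine ⟨K1 + K2 + 1, by positivity, fun s t hs ht => ⟨?_, ?_⟩⟩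
  · have := H1 s t hs ht
    nlinarith [abs_nonneg (s - t)]
  · have := H2 s t hs ht
    nlinarith [abs_nonneg (s - t)]

lemma pert {n : ℕ} (hn : 1 ≤ n) {W : Matrix (Fin n) (Fin n) ℝ} (hW : W.IsSymm) (b : ℝ)
    (hb : 0 < b) : ∃ M : ℝ, 0 < M ∧ ∀ ε : ℝ, 0 < ε → ε ≤ 1 →
      ∀ Wt : Matrix (Fin n) (Fin n) ℝ, Wt.IsSymm →
        (∀ i j, |Wt i j - W i j| ≤ ε * |W i j|) → ∀ β : ℝ, 0 ≤ β → β ≤ b →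
        |lambdaMin (betheH Wt β) - lambdaMin (betheH W β)| ≤ M * ε := by
  set w : ℝ := 1 + ∑ i, ∑ j, |W i j| with hw
  have hw0 : 0 < w := by positivity
  have hWw : ∀ i j, |W i j| ≤ w := by
    intro i j
    have h1 := Finset.single_le_sum (f := fun j => |W i j|) (fun j _ => abs_nonneg _)
      (Finset.mem_univ j)
    have h2 := Finset.single_le_sum (f := fun i => ∑ j, |W i j|)
      (fun i _ => Finset.sum_nonneg fun j _ => abs_nonneg _) (Finset.mem_univ i)
    linarith
  obtain ⟨K, hK, HK⟩ := entry_lip (b * (2 * w))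
  have hn0 : (0 : ℝ) < n := by exact_mod_cast hn
  refine ⟨n * ((n + 1) * (K * (b * w))), by positivity, ?_⟩
  intro ε he he1 Wt hWt hp β hβ hβb
  have hs : ∀ i j, |β * W i j| ≤ b * (2 * w) := by
    intro i j
    rw [abs_mul, abs_of_nonneg hβ]
    exact mul_le_mul hβb ((hWw i j).trans (by linarith)) (abs_nonneg _) hb.le
  have ht : ∀ i j, |β * Wt i j| ≤ b * (2 * w) := by
    intro i j
    rw [abs_mul, abs_of_nonneg hβ]
    refine mul_le_mul hβb ?_ (abs_nonneg _) hb.le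
    have h1 := hp i j
    have h2 : ε * |W i j| ≤ |W i j| := by nlinarith [abs_nonneg (W i j)]
    have h3 := abs_sub_abs_le_abs_sub (Wt i j) (W i j)
    linarith [hWw i j]
  have hd : ∀ i j, |β * Wt i j - β * W i j| ≤ b * w * ε := by
    intro i j
    rw [← mul_sub, abs_mul, abs_of_nonneg hβ]
    have h1 : |Wt i j - W i j| ≤ ε * w :=
      (hp i j).trans (mul_le_mul_of_nonneg_left (hWw i j) he.le)
    have := mul_le_mul hβb h1 (abs_nonneg _) hb.le
    linarith
  have hL := fun i j => HK _ _ (ht i j) (hs i j)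
  have hKd : ∀ i j, K * |β * Wt i j - β * W i j| ≤ K * (b * w * ε) := fun i j =>
    mul_le_mul_of_nonneg_left (hd i j) hK.le
  have hq : 0 ≤ K * (b * w * ε) := by positivity
  have hent : ∀ i j, |betheH Wt β i j - betheH W β i j| ≤ (n + 1) * (K * (b * w * ε)) := by
    intro i j
    have hS := ((hL i j).2).trans (hKd i j)
    by_cases hij : i = j
    · subst hij
      simp only [betheH, betheDTilde, betheS, Matrix.sub_apply, Matrix.add_apply,
        Matrix.diagonal_apply_eq, Matrix.of_apply]
      have hD : |∑ j, Real.sinh (β * Wt i j) ^ 2 - ∑ j, Real.sinh (β * W i j) ^ 2|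
          ≤ n * (K * (b * w * ε)) := by
        rw [← Finset.sum_sub_distrib]
        refine (Finset.abs_sum_le_sum_abs _ _).trans ?_
        refine (Finset.sum_le_sum fun j _ => ((hL i j).1).trans (hKd i j)).trans ?_
        simp
      rw [abs_le] at hS hD ⊢
      constructor <;> linarith [hS.1, hS.2, hD.1, hD.2]
    · simp only [betheH, betheDTilde, betheS, Matrix.sub_apply, Matrix.add_apply,
        Matrix.diagonal_apply_ne _ hij, Matrix.of_apply]
      have : 0 ≤ n * (K * (b * w * ε)) := by positivity
      rw [abs_le] at hS ⊢
      constructor <;> linarith [hS.1, hS.2]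
  have := lm_lip hn (betheH_symm hW β) (betheH_symm hWt β) hent
  linarith

/-- Stability of the Nishimori temperature under noise: if β_N > 0 is a
non-degenerate root of f(β) = λ_min(H(β; W)), then for every sufficiently small
edgewise-relative perturbation W̃ of W, there is a Nishimori temperature β̃_N of
W̃ with |β̃_N - β_N| ≤ C·ε. -/
theorem nishimori_temperature_stability {n : ℕ} (hn : 1 ≤ n)
    (W : Matrix (Fin n) (Fin n) ℝ) (hW : W.IsSymm) (hdiag : ∀ i, W i i = 0)
    (βN : ℝ) (hβN : 0 < βN)
    (hroot : lambdaMin (betheH W βN) = 0)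
    (hdiff : DifferentiableAt ℝ (fun β : ℝ => lambdaMin (betheH W β)) βN)
    (hnondeg : deriv (fun β : ℝ => lambdaMin (betheH W β)) βN ≠ 0) :
    ∃ C > (0 : ℝ), ∃ ε₀ > (0 : ℝ), ∀ ε : ℝ, 0 < ε → ε ≤ ε₀ →
      ∀ Wt : Matrix (Fin n) (Fin n) ℝ,
        Wt.IsSymm → (∀ i, Wt i i = 0) →
        (∀ i j, |Wt i j - W i j| ≤ ε * |W i j|) →
        ∃ βtN : ℝ, 0 < βtN ∧ lambdaMin (betheH Wt βtN) = 0 ∧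
          |βtN - βN| ≤ C * ε := by
  obtain ⟨M, hM, HM⟩ := pert hn hW (2 * βN) (by positivity)
  set f : ℝ → ℝ := fun β : ℝ => lambdaMin (betheH W β) with hf
  set d := deriv f βN with hd
  have hd0 : 0 < |d| := abs_pos.2 hnondeg
  have hder : HasDerivAt f d βN := hdiff.hasDerivAt
  have hlo := (hasDerivAt_iff_isLittleO.1 hder).def (c := |d| / 2) (by positivity)
  obtain ⟨h0, hh0, Hh⟩ := Metric.eventually_nhds_iff.1 hlo
  have hroot' : f βN = 0 := hroot
  have Hf : ∀ h, |h| < h0 → |f (βN + h) - h * d| ≤ |d| / 2 * |h| := by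
    intro h hh
    have := Hh (y := βN + h) (by simpa [Real.dist_eq] using hh)
    simpa [hroot'] using this
  set C := 4 * M / |d| with hC
  have hC0 : 0 < C := by positivity
  have hCd : |d| * C = 4 * M := by rw [hC]; field_simp
  refine ⟨C, hC0, min 1 (min h0 βN / (2 * C)), by positivity, ?_⟩
  intro ε he hε Wt hWt _ hp
  have he1 : ε ≤ 1 := hε.trans (min_le_left _ _)
  have he2 : ε * (2 * C) ≤ min h0 βN := by
    rw [← le_div_iff₀ (by positivity)]; exact hε.trans (min_le_right _ _)
  have he3 := he2.trans (min_le_left _ _)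
  have he4 := he2.trans (min_le_right _ _)
  have hCe : 0 < C * ε := by positivity
  set g : ℝ → ℝ := fun β : ℝ => lambdaMin (betheH Wt β) with hg
  have hgc : Continuous g := lm_cont hn hWt
  have hP := HM ε he he1 Wt hWt hp (βN + C * ε) (by linarith) (by linarith)
  have hQ := HM ε he he1 Wt hWt hp (βN + -(C * ε)) (by linarith) (by linarith)
  have hP' := Hf (C * ε) (by rw [abs_of_pos hCe]; linarith)
  have hQ' := Hf (-(C * ε)) (by rw [abs_neg, abs_of_pos hCe]; linarith)
  rw [abs_neg] at hQ'
  rw [abs_of_pos hCe] at hP' hQ'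
  change |g (βN + C * ε) - f (βN + C * ε)| ≤ _ at hP
  change |g (βN + -(C * ε)) - f (βN + -(C * ε))| ≤ _ at hQ
  rw [abs_le] at hP hQ hP' hQ'
  have hk : |d| * (C * ε) = 4 * (M * ε) := by rw [← mul_assoc, hCd]; ring
  have hMe : 0 < M * ε := by positivity
  have hle : βN + -(C * ε) ≤ βN + C * ε := by linarith
  have hz : (0 : ℝ) ∈ Set.uIcc (g (βN + -(C * ε))) (g (βN + C * ε)) := by
    rw [Set.mem_uIcc]
    rcases lt_or_gt_of_ne hnondeg with hneg | hpos
    · right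
      have : |d| = -d := abs_of_neg hneg
      rw [this] at hk hP' hQ'
      constructor <;> linarith [hP.1, hP.2, hQ.1, hQ.2, hP'.1, hP'.2, hQ'.1, hQ'.2]
    · left
      have : |d| = d := abs_of_pos hpos
      rw [this] at hk hP' hQ'
      constructor <;> linarith [hP.1, hP.2, hQ.1, hQ.2, hP'.1, hP'.2, hQ'.1, hQ'.2]
  obtain ⟨x, hx, hx0⟩ := intermediate_value_uIcc hgc.continuousOn hz
  rw [Set.uIcc_of_le hle] at hx
  refine ⟨x, by linarith [hx.1], hx0, ?_⟩
  rw [abs_le]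
  constructor <;> linarith [hx.1, hx.2]
end
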